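/- If u ∈ 𝒜₂ and v, w ∈ 𝒜₁, then there is a constant c_* ≥ 1, depending only on the C²-norms ‖u‖₂, ‖v‖₂, ‖w‖₂ (and independent of α₀, H₁, H₂), such that ‖∂^α(uvw)‖₀ ≤ c_* H₁^{α₁} H₂^{α₂} [(|α|−1)!]^s for every α = (α₁,α₂) ≤ α₀ with |α| ≥ 1 (i.e. c_*^{−1} uvw ∈ 𝒜₀). -/

import Mathlib

open Set

noncomputable section

/-- The closed strip `R̄ = ℝ × [p₀, 0]`. -/
def Strip (p₀ : ℝ) : Set (ℝ × ℝ) := {z : ℝ × ℝ | p₀ ≤ z.2 ∧ z.2 ≤ 0}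

/-- The mixed partial derivative `∂_q^a ∂_p^b f` of `f : ℝ² → ℝ` within the set `S`,
realized as the iterated Fréchet derivative within `S` applied to the corresponding
coordinate directions. -/
def mpw (S : Set (ℝ × ℝ)) (a b : ℕ) (f : ℝ × ℝ → ℝ) (z : ℝ × ℝ) : ℝ :=
  iteratedFDerivWithin ℝ (a + b) f S z
    (fun i => if (i : ℕ) < a then ((1 : ℝ), (0 : ℝ)) else ((0 : ℝ), (1 : ℝ)))

/-- `∂_q^a ∂_p^b f` within the strip `R̄`. -/
def pd (p₀ : ℝ) (a b : ℕ) (f : ℝ × ℝ → ℝ) : ℝ × ℝ → ℝ := mpw (Strip p₀) a b f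

/-- Euclidean distance on `ℝ²`. -/
def edist2 (z z' : ℝ × ℝ) : ℝ := Real.sqrt ((z.1 - z'.1) ^ 2 + (z.2 - z'.2) ^ 2)

/-- `sup_{R̄} |f|`. -/
def supS (p₀ : ℝ) (f : ℝ × ℝ → ℝ) : ℝ := sSup ((fun z => |f z|) '' Strip p₀)

/-- The Hölder seminorm of exponent `μ` of `f` over the strip `R̄`. -/
def hsemi (p₀ μ : ℝ) (f : ℝ × ℝ → ℝ) : ℝ :=
  sSup {y | ∃ z ∈ Strip p₀, ∃ z' ∈ Strip p₀, z ≠ z' ∧ y = |f z - f z'| / (edist2 z z') ^ μ}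

/-- The `C^k` sup-norm `‖f‖_k = Σ_{|α| ≤ k} sup_{R̄} |∂^α f|`. -/
def cknorm (p₀ : ℝ) (k : ℕ) (f : ℝ × ℝ → ℝ) : ℝ :=
  ∑ a ∈ Finset.range (k + 1), ∑ b ∈ Finset.range (k + 1 - a), supS p₀ (pd p₀ a b f)

/-- The Hölder norm `‖f‖_{k,μ} = ‖f‖_k + max_{|α| = k} [∂^α f]_μ`. -/
def hnorm (p₀ μ : ℝ) (k : ℕ) (f : ℝ × ℝ → ℝ) : ℝ :=
  cknorm p₀ k f + sSup {y | ∃ a b : ℕ, a + b = k ∧ y = hsemi p₀ μ (pd p₀ a b f)}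

/-- Boundedness of `f` on the strip (finiteness of `sup_{R̄} |f|`). -/
def bddS (p₀ : ℝ) (f : ℝ × ℝ → ℝ) : Prop := BddAbove ((fun z => |f z|) '' Strip p₀)

/-- Finiteness of the Hölder seminorm of `f` on the strip. -/
def bddH (p₀ μ : ℝ) (f : ℝ × ℝ → ℝ) : Prop :=
  BddAbove {y | ∃ z ∈ Strip p₀, ∃ z' ∈ Strip p₀, z ≠ z' ∧ y = |f z - f z'| / (edist2 z z') ^ μ}

/-- Finiteness of the `C^{k,μ}(R̄)` norm. -/
def finCk (p₀ μ : ℝ) (k : ℕ) (f : ℝ × ℝ → ℝ) : Prop :=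
  (∀ a b : ℕ, a + b ≤ k → bddS p₀ (pd p₀ a b f)) ∧
  (∀ a b : ℕ, a + b = k → bddH p₀ μ (pd p₀ a b f))

/-- Membership in `C^{k,μ}(R̄)`: `k` times continuously differentiable on the strip with
bounded derivatives, the top-order ones Hölder continuous of exponent `μ`. -/
def MemCk (p₀ μ : ℝ) (k : ℕ) (f : ℝ × ℝ → ℝ) : Prop :=
  ContDiffOn ℝ k f (Strip p₀) ∧ finCk p₀ μ k f

/-- The class `𝒜_j`: functions `f ∈ C^{|α₀|,μ}(R̄)` such that
`‖∂^α f‖₀ ≤ H₁^{α₁−j} H₂^{α₂} [(|α|−j−1)!]^s` for every `α ≤ α₀` with `|α| ≥ j+1`. -/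
def memA (p₀ μ s H₁ H₂ : ℝ) (α₀ : ℕ × ℕ) (j : ℕ) (f : ℝ × ℝ → ℝ) : Prop :=
  MemCk p₀ μ (α₀.1 + α₀.2) f ∧
  ∀ a b : ℕ, a ≤ α₀.1 → b ≤ α₀.2 → j + 1 ≤ a + b →
    ∀ z ∈ Strip p₀, |pd p₀ a b f z| ≤
      H₁ ^ ((a : ℤ) - (j : ℤ)) * H₂ ^ b * (Nat.factorial (a + b - (j + 1)) : ℝ) ^ s

theorem strip_ud {p₀ : ℝ} (hp : p₀ < 0) : UniqueDiffOn ℝ (Strip p₀) := by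
  have h : Strip p₀ = (univ : Set ℝ) ×ˢ (Icc p₀ 0) := by
    ext z; simp [Strip]
  rw [h]
  exact uniqueDiffOn_univ.prod (uniqueDiffOn_Icc hp)

theorem pd_zero (p₀ : ℝ) (f : ℝ × ℝ → ℝ) (z : ℝ × ℝ) : pd p₀ 0 0 f z = f z := by
  simp [pd, mpw]

theorem pd_diff {p₀ : ℝ} (hp : p₀ < 0) {N : ℕ} {f : ℝ × ℝ → ℝ}
    (hf : ContDiffOn ℝ N f (Strip p₀)) {n : ℕ} (hn : n < N) :
    DifferentiableOn ℝ (iteratedFDerivWithin ℝ n f (Strip p₀)) (Strip p₀) :=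
  hf.differentiableOn_iteratedFDerivWithin (by exact_mod_cast hn) (strip_ud hp)

theorem pd_hasF {p₀ : ℝ} (hp : p₀ < 0) {N : ℕ} {f : ℝ × ℝ → ℝ}
    (hf : ContDiffOn ℝ N f (Strip p₀)) {n : ℕ} (hn : n < N) (m : Fin n → ℝ × ℝ)
    {z : ℝ × ℝ} (hz : z ∈ Strip p₀) :
    HasFDerivWithinAt (fun y => iteratedFDerivWithin ℝ n f (Strip p₀) y m)
      ((fderivWithin ℝ (iteratedFDerivWithin ℝ n f (Strip p₀)) (Strip p₀) z).flipMultilinear m)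
      (Strip p₀) z := by
  have h := ((pd_diff hp hf hn) z hz).hasFDerivWithinAt
  have h2 := (ContinuousMultilinearMap.apply ℝ (fun _ : Fin n => ℝ × ℝ) ℝ m).hasFDerivAt.comp_hasFDerivWithinAt z h
  exact h2

/-- derivative data -/
theorem pd_succ_left {p₀ : ℝ} (hp : p₀ < 0) {N : ℕ} {f : ℝ × ℝ → ℝ}
    (hf : ContDiffOn ℝ N f (Strip p₀)) {a b : ℕ} (hn : a + b < N)
    {z : ℝ × ℝ} (hz : z ∈ Strip p₀) :
    ∃ L : ℝ × ℝ →L[ℝ] ℝ, HasFDerivWithinAt (pd p₀ a b f) L (Strip p₀) z ∧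
      L (1, 0) = pd p₀ (a + 1) b f z := by
  refine ⟨_, pd_hasF hp hf hn _ hz, ?_⟩
  have e : ∀ (n : ℕ) (h : n = a + b + 1), iteratedFDerivWithin ℝ n f (Strip p₀) z
      (fun i => if (i : ℕ) < a + 1 then ((1 : ℝ), (0 : ℝ)) else ((0 : ℝ), (1 : ℝ))) =
      iteratedFDerivWithin ℝ (a + b + 1) f (Strip p₀) z
      (fun i => if (i : ℕ) < a + 1 then ((1 : ℝ), (0 : ℝ)) else ((0 : ℝ), (1 : ℝ))) := by
    rintro _ rfl; rfl
  unfold pd mpw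
  rw [e _ (by omega), iteratedFDerivWithin_succ_apply_left]
  simp [Fin.tail_def]

theorem pd_succ_right {p₀ : ℝ} (hp : p₀ < 0) {N : ℕ} {f : ℝ × ℝ → ℝ}
    (hf : ContDiffOn ℝ N f (Strip p₀)) {b : ℕ} (hn : 0 + b < N)
    {z : ℝ × ℝ} (hz : z ∈ Strip p₀) :
    ∃ L : ℝ × ℝ →L[ℝ] ℝ, HasFDerivWithinAt (pd p₀ 0 b f) L (Strip p₀) z ∧
      L (0, 1) = pd p₀ 0 (b + 1) f z := by
  refine ⟨_, pd_hasF hp hf hn _ hz, ?_⟩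
  unfold pd mpw
  have e : ∀ (n : ℕ) (h : n = 0 + b + 1), iteratedFDerivWithin ℝ n f (Strip p₀) z
      (fun i => if (i : ℕ) < 0 then ((1 : ℝ), (0 : ℝ)) else ((0 : ℝ), (1 : ℝ))) =
      iteratedFDerivWithin ℝ (0 + b + 1) f (Strip p₀) z
      (fun i => if (i : ℕ) < 0 then ((1 : ℝ), (0 : ℝ)) else ((0 : ℝ), (1 : ℝ))) := by
    rintro _ rfl; rfl
  rw [e _ (by omega), iteratedFDerivWithin_succ_apply_left]
  simp [Fin.tail_def]

/-- One Leibniz step along a direction. -/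
theorem leib_step {S : Set (ℝ × ℝ)} (hS : UniqueDiffOn ℝ S) (e : ℝ × ℝ) (n : ℕ)
    (P : ℝ × ℝ → ℝ) (F : ℕ → ℕ → ℝ × ℝ → ℝ) {z : ℝ × ℝ} (hz : z ∈ S) (X : ℝ)
    (G : ℕ → ℕ → ℝ)
    (hP : ∃ L : ℝ × ℝ →L[ℝ] ℝ, HasFDerivWithinAt P L S z ∧ L e = X)
    (heq : ∀ y ∈ S, P y = ∑ p ∈ Finset.HasAntidiagonal.antidiagonal n, (n.choose p.1 : ℝ) * F p.1 p.2 y)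
    (hF : ∀ i j, i + j = n → ∃ L : ℝ × ℝ →L[ℝ] ℝ, HasFDerivWithinAt (F i j) L S z ∧
      L e = G (i + 1) j + G i (j + 1)) :
    X = ∑ p ∈ Finset.HasAntidiagonal.antidiagonal (n + 1), ((n + 1).choose p.1 : ℝ) * G p.1 p.2 := by
  obtain ⟨L, hL, rfl⟩ := hP
  choose! L' hL' hG using hF
  have h1 : HasFDerivWithinAt P (∑ p ∈ Finset.HasAntidiagonal.antidiagonal n, (n.choose p.1 : ℝ) • L' p.1 p.2) S z := by
    have : HasFDerivWithinAt (fun y => ∑ p ∈ Finset.HasAntidiagonal.antidiagonal n, (n.choose p.1 : ℝ) * F p.1 p.2 y)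
        (∑ p ∈ Finset.HasAntidiagonal.antidiagonal n, (n.choose p.1 : ℝ) • L' p.1 p.2) S z := by
      apply HasFDerivWithinAt.fun_sum
      intro p hp
      exact (hL' p.1 p.2 (Finset.HasAntidiagonal.mem_antidiagonal.1 hp)).const_mul _
    exact this.congr heq (heq z hz)
  rw [(hS z hz).eq hL h1, Finset.sum_antidiagonal_choose_succ_mul, ← Finset.sum_add_distrib]
  simp only [ContinuousLinearMap.sum_apply, ContinuousLinearMap.smul_apply, smul_eq_mul]
  apply Finset.sum_congr rfl
  intro p hp
  have := Finset.HasAntidiagonal.mem_antidiagonal.1 hp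
  rw [hG _ _ this, ← this, Nat.choose_symm_add]
  ring

theorem leib_b {p₀ : ℝ} (hp : p₀ < 0) {N : ℕ} {f g : ℝ × ℝ → ℝ}
    (hf : ContDiffOn ℝ N f (Strip p₀)) (hg : ContDiffOn ℝ N g (Strip p₀)) (b : ℕ) :
    b ≤ N → ∀ z ∈ Strip p₀, pd p₀ 0 b (fun y => f y * g y) z =
      ∑ q ∈ Finset.HasAntidiagonal.antidiagonal b, (b.choose q.1 : ℝ) * (pd p₀ 0 q.1 f z * pd p₀ 0 q.2 g z) := by
  induction b with
  | zero => intro _ z _; simp [pd_zero]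
  | succ b ih =>
    intro hb z hz
    refine leib_step (strip_ud hp) (0, 1) b (pd p₀ 0 b (fun y => f y * g y))
      (fun i j y => pd p₀ 0 i f y * pd p₀ 0 j g y) hz _
      (fun i j => pd p₀ 0 i f z * pd p₀ 0 j g z) ?_ (ih (by omega)) ?_
    · exact pd_succ_right hp (hf.mul hg) (by omega) hz
    · intro i j hij
      obtain ⟨L, hL, e1⟩ := pd_succ_right hp hf (b := i) (by omega) hz
      obtain ⟨L', hL', e2⟩ := pd_succ_right hp hg (b := j) (by omega) hz
      refine ⟨_, hL.mul hL', ?_⟩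
      simp [e1, e2]
      ring

theorem leib_a {p₀ : ℝ} (hp : p₀ < 0) {N : ℕ} {f g : ℝ × ℝ → ℝ}
    (hf : ContDiffOn ℝ N f (Strip p₀)) (hg : ContDiffOn ℝ N g (Strip p₀)) (b a : ℕ) :
    a + b ≤ N → ∀ z ∈ Strip p₀, pd p₀ a b (fun y => f y * g y) z =
      ∑ p ∈ Finset.HasAntidiagonal.antidiagonal a, (a.choose p.1 : ℝ) *
      ∑ q ∈ Finset.HasAntidiagonal.antidiagonal b, (b.choose q.1 : ℝ) * (pd p₀ p.1 q.1 f z * pd p₀ p.2 q.2 g z) := by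
  induction a with
  | zero => 
    intro h z hz
    simp [leib_b hp hf hg b (by omega) z hz]
  | succ a ih =>
    intro hb z hz
    refine leib_step (strip_ud hp) (1, 0) a (pd p₀ a b (fun y => f y * g y))
      (fun i j y => ∑ q ∈ Finset.HasAntidiagonal.antidiagonal b, (b.choose q.1 : ℝ) *
        (pd p₀ i q.1 f y * pd p₀ j q.2 g y)) hz _
      (fun i j => ∑ q ∈ Finset.HasAntidiagonal.antidiagonal b, (b.choose q.1 : ℝ) *
        (pd p₀ i q.1 f z * pd p₀ j q.2 g z)) ?_ (ih (by omega)) ?_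
    · exact pd_succ_left hp (hf.mul hg) (by omega) hz
    · intro i j hij
      have h1 : ∀ k, i + k < N → _ := fun k hk => pd_succ_left hp hf (a := i) (b := k) hk hz
      have h2 : ∀ k, j + k < N → _ := fun k hk => pd_succ_left hp hg (a := j) (b := k) hk hz
      choose! L hL e1 using h1
      choose! L' hL' e2 using h2
      refine ⟨_, HasFDerivWithinAt.fun_sum (u := Finset.HasAntidiagonal.antidiagonal b) (fun q hq =>
        ((hL q.1 ?_).mul (hL' q.2 ?_)).const_mul (b.choose q.1 : ℝ)), ?_⟩
      · have := Finset.HasAntidiagonal.mem_antidiagonal.1 hq; omega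
      · have := Finset.HasAntidiagonal.mem_antidiagonal.1 hq; omega
      · rw [← Finset.sum_add_distrib, ContinuousLinearMap.sum_apply]
        apply Finset.sum_congr rfl
        intro q hq
        have := Finset.HasAntidiagonal.mem_antidiagonal.1 hq
        simp [e1 q.1 (by omega), e2 q.2 (by omega)]
        ring

theorem vander (b a : ℕ) : ∀ F : ℕ → ℕ → ℝ,
    ∑ p ∈ Finset.HasAntidiagonal.antidiagonal a, (a.choose p.1 : ℝ) *
      ∑ q ∈ Finset.HasAntidiagonal.antidiagonal b, (b.choose q.1 : ℝ) * F (p.1 + q.1) (p.2 + q.2) =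
    ∑ r ∈ Finset.HasAntidiagonal.antidiagonal (a + b), ((a + b).choose r.1 : ℝ) * F r.1 r.2 := by
  induction a with
  | zero => intro F; simp
  | succ a ih =>
    intro F
    rw [show a + 1 + b = a + b + 1 by ring, Finset.sum_antidiagonal_choose_succ_mul,
      Finset.sum_antidiagonal_choose_succ_mul (f := fun i j => 
        ∑ q ∈ Finset.HasAntidiagonal.antidiagonal b, (b.choose q.1 : ℝ) * F (i + q.1) (j + q.2))]
    have h1 := ih (fun x y => F x (y + 1))
    have h2 := ih (fun x y => F (x + 1) y)
    have sy : ∀ (n : ℕ) (G : ℕ × ℕ → ℝ), ∑ p ∈ Finset.HasAntidiagonal.antidiagonal n, (n.choose p.2 : ℝ) * G p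
        = ∑ p ∈ Finset.HasAntidiagonal.antidiagonal n, (n.choose p.1 : ℝ) * G p := by
      intro n G
      apply Finset.sum_congr rfl
      intro p hp
      rw [← Finset.HasAntidiagonal.mem_antidiagonal.1 hp, Nat.choose_symm_add]
    rw [sy, sy, ← h1, ← h2]
    simp only [add_right_comm]

def psi (n : ℕ) : ℝ := (n.factorial : ℝ) / ((n : ℝ) + 1) ^ 2

theorem psi_pos (n : ℕ) : 0 < psi n := by
  unfold psi; positivity

theorem sq_sum (n : ℕ) : ∑ k ∈ Finset.range n, 1 / ((k : ℝ) + 1) ^ 2 ≤ 2 - 2 / ((n : ℝ) + 1) := by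
  induction n with
  | zero => simp
  | succ n ih =>
    rw [Finset.sum_range_succ]
    have h : 1 / ((n : ℝ) + 1) ^ 2 ≤ 2 / ((n : ℝ) + 1) - 2 / ((n : ℝ) + 1 + 1) := by
      rw [div_sub_div _ _ (by positivity) (by positivity),
        div_le_div_iff₀ (by positivity) (by positivity)]
      have : (0 : ℝ) ≤ n := by positivity
      nlinarith [mul_nonneg this this, mul_nonneg this (mul_nonneg this this)]
    push_cast
    linarith

theorem anti1 (n : ℕ) : ∑ p ∈ Finset.HasAntidiagonal.antidiagonal n, 1 / ((p.1 : ℝ) + 1) ^ 2 ≤ 2 := by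
  rw [Finset.Nat.sum_antidiagonal_eq_sum_range_succ_mk]
  refine (sq_sum (n + 1)).trans ?_
  have : (0 : ℝ) ≤ 2 / (((n + 1 : ℕ) : ℝ) + 1) := by positivity
  linarith

theorem anti2 (n : ℕ) : ∑ p ∈ Finset.HasAntidiagonal.antidiagonal n, 1 / ((p.2 : ℝ) + 1) ^ 2 ≤ 2 := by
  rw [← Finset.Nat.sum_antidiagonal_swap]
  exact anti1 n

theorem psi_conv (n : ℕ) : ∑ p ∈ Finset.HasAntidiagonal.antidiagonal n,
    (n.choose p.1 : ℝ) * (psi p.1 * psi p.2) ≤ 8 * psi n := by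
  have h : ∀ p ∈ Finset.HasAntidiagonal.antidiagonal n, (n.choose p.1 : ℝ) * (psi p.1 * psi p.2) ≤
      2 * psi n * (1 / ((p.1 : ℝ) + 1) ^ 2 + 1 / ((p.2 : ℝ) + 1) ^ 2) := by
    rintro ⟨i, j⟩ hp
    have hp' := Finset.HasAntidiagonal.mem_antidiagonal.1 hp
    simp only at hp' ⊢
    subst hp'
    have h1 : ((i + j).choose i : ℝ) * (i.factorial * j.factorial) = (i + j).factorial := by
      have := Nat.add_choose_mul_factorial_mul_factorial i j
      rw [Nat.choose_symm_add, ← mul_assoc]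
      exact_mod_cast this
    have e : ((i + j).choose i : ℝ) * (psi i * psi j) =
        (i + j).factorial / (((i : ℝ) + 1) ^ 2 * ((j : ℝ) + 1) ^ 2) := by
      rw [← h1]; unfold psi; field_simp
    have e2 : 2 * psi (i + j) * (1 / ((i : ℝ) + 1) ^ 2 + 1 / ((j : ℝ) + 1) ^ 2) =
       ((i + j).factorial / (((i : ℝ) + 1) ^ 2 * ((j : ℝ) + 1) ^ 2)) *
       (2 * (((i : ℝ) + 1) ^ 2 + ((j : ℝ) + 1) ^ 2) / ((i : ℝ) + j + 1) ^ 2) := by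
      unfold psi; push_cast; field_simp; ring
    rw [e, e2]
    apply le_mul_of_one_le_right (by positivity)
    rw [one_le_div (by positivity)]
    have hi : (0 : ℝ) ≤ i := by positivity
    have hj : (0 : ℝ) ≤ j := by positivity
    nlinarith [sq_nonneg ((i : ℝ) - j)]
  refine (Finset.sum_le_sum h).trans ?_
  rw [← Finset.mul_sum, Finset.sum_add_distrib]
  have := anti1 n
  have := anti2 n
  have := psi_pos n
  nlinarith

theorem psi_conv_s {s : ℝ} (hs : 1 ≤ s) (n : ℕ) : ∑ p ∈ Finset.HasAntidiagonal.antidiagonal n,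
    (n.choose p.1 : ℝ) * (psi p.1 ^ s * psi p.2 ^ s) ≤ 8 ^ s * psi n ^ s := by
  have hpp := fun n => (psi_pos n).le
  set X : ℝ := 8 * psi n with hX
  have hX0 : 0 < X := by have := psi_pos n; positivity
  have h : ∀ p ∈ Finset.HasAntidiagonal.antidiagonal n, (n.choose p.1 : ℝ) * (psi p.1 ^ s * psi p.2 ^ s) ≤
      ((n.choose p.1 : ℝ) * (psi p.1 * psi p.2)) * X ^ (s - 1) := by
    intro p hp
    have hp' := Finset.HasAntidiagonal.mem_antidiagonal.1 hp
    have hc : (1 : ℝ) ≤ n.choose p.1 := by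
      exact_mod_cast Nat.choose_pos (by omega)
    have hy : 0 < (n.choose p.1 : ℝ) * (psi p.1 * psi p.2) := by
      have := psi_pos p.1; have := psi_pos p.2; positivity
    have hle : (n.choose p.1 : ℝ) * (psi p.1 * psi p.2) ≤ X :=
      (Finset.single_le_sum (f := fun p : ℕ × ℕ => (n.choose p.1 : ℝ) * (psi p.1 * psi p.2))
        (fun q _ => mul_nonneg (by positivity) (mul_nonneg (hpp _) (hpp _))) hp).trans (psi_conv n)
    calc (n.choose p.1 : ℝ) * (psi p.1 ^ s * psi p.2 ^ s)
        ≤ (n.choose p.1 : ℝ) ^ s * (psi p.1 ^ s * psi p.2 ^ s) := by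
          gcongr
          · exact mul_nonneg (Real.rpow_nonneg (hpp _) _) (Real.rpow_nonneg (hpp _) _)
          · exact Real.self_le_rpow_of_one_le hc hs
      _ = ((n.choose p.1 : ℝ) * (psi p.1 * psi p.2)) ^ s := by
          rw [Real.mul_rpow (by positivity) (mul_nonneg (hpp _) (hpp _)), Real.mul_rpow (hpp _) (hpp _)]
      _ = ((n.choose p.1 : ℝ) * (psi p.1 * psi p.2)) * ((n.choose p.1 : ℝ) * (psi p.1 * psi p.2)) ^ (s - 1) := by
          rw [← Real.rpow_one_add' hy.le (by linarith)]; congr 1; ring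
      _ ≤ _ := by
          apply mul_le_mul_of_nonneg_left _ hy.le
          exact Real.rpow_le_rpow hy.le hle (by linarith)
  refine (Finset.sum_le_sum h).trans ?_
  rw [← Finset.sum_mul, ← Real.mul_rpow (by norm_num) (hpp n), ← hX]
  calc _ ≤ X * X ^ (s - 1) := by
        apply mul_le_mul_of_nonneg_right (psi_conv n) (Real.rpow_nonneg hX0.le _)
    _ = X ^ s := by
        rw [← Real.rpow_one_add' hX0.le (by linarith)]; congr 1; ring

theorem fac_le (n : ℕ) : ((n - 2).factorial : ℝ) ≤ 5 * psi n := by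
  unfold psi
  rw [← mul_div_assoc, le_div_iff₀ (by positivity)]
  match n with
  | 0 => norm_num
  | 1 => norm_num
  | n + 2 =>
    simp only [Nat.add_sub_cancel, Nat.factorial_succ]
    push_cast
    have h : (0 : ℝ) < n.factorial := by positivity
    have hn : (0 : ℝ) ≤ n := by positivity
    nlinarith [mul_nonneg h.le hn, mul_nonneg h.le (mul_nonneg hn hn)]

theorem psi_le (n : ℕ) (hn : 1 ≤ n) : psi n ≤ ((n - 1).factorial : ℝ) := by
  unfold psi
  rw [div_le_iff₀ (by positivity)]
  obtain ⟨n, rfl⟩ : ∃ m, n = m + 1 := ⟨n - 1, by omega⟩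
  simp only [Nat.add_sub_cancel, Nat.factorial_succ]
  push_cast
  have h : (0 : ℝ) < n.factorial := by positivity
  have hn : (0 : ℝ) ≤ n := by positivity
  nlinarith [mul_nonneg h.le hn, mul_nonneg h.le (mul_nonneg hn hn)]

def BB (p₀ s H₁ H₂ : ℝ) (α₀ : ℕ × ℕ) (M : ℝ) (f : ℝ × ℝ → ℝ) : Prop :=
  ∀ a b : ℕ, a ≤ α₀.1 → b ≤ α₀.2 → ∀ z ∈ Strip p₀,
    |pd p₀ a b f z| ≤ M * (H₁ ^ a * H₂ ^ b * psi (a + b) ^ s)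

theorem BB_mul {p₀ s H₁ H₂ : ℝ} (hp : p₀ < 0) (hs : 1 ≤ s) (h1 : 0 ≤ H₁) (h2 : 0 ≤ H₂)
    {α₀ : ℕ × ℕ} {M M' : ℝ} (hM : 0 ≤ M) (hM' : 0 ≤ M') {f g : ℝ × ℝ → ℝ}
    (hf : ContDiffOn ℝ (α₀.1 + α₀.2 : ℕ) f (Strip p₀)) (hg : ContDiffOn ℝ (α₀.1 + α₀.2 : ℕ) g (Strip p₀))
    (Bf : BB p₀ s H₁ H₂ α₀ M f) (Bg : BB p₀ s H₁ H₂ α₀ M' g) :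
    BB p₀ s H₁ H₂ α₀ (8 ^ s * M * M') (fun y => f y * g y) := by
  intro a b ha hb z hz
  have hps : ∀ n, 0 ≤ psi n ^ s := fun n => Real.rpow_nonneg (psi_pos n).le _
  rw [leib_a hp hf hg b a (by omega) z hz]
  set C := M * M' * (H₁ ^ a * H₂ ^ b) with hC
  have hC0 : 0 ≤ C := by positivity
  have key : |∑ p ∈ Finset.HasAntidiagonal.antidiagonal a, (a.choose p.1 : ℝ) *
      ∑ q ∈ Finset.HasAntidiagonal.antidiagonal b, (b.choose q.1 : ℝ) * (pd p₀ p.1 q.1 f z * pd p₀ p.2 q.2 g z)|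
      ≤ ∑ p ∈ Finset.HasAntidiagonal.antidiagonal a, (a.choose p.1 : ℝ) *
      ∑ q ∈ Finset.HasAntidiagonal.antidiagonal b, (b.choose q.1 : ℝ) *
        (C * (psi (p.1 + q.1) ^ s * psi (p.2 + q.2) ^ s)) := by
    refine (Finset.abs_sum_le_sum_abs _ _).trans (Finset.sum_le_sum ?_)
    rintro ⟨i, i'⟩ hi
    replace hi : i + i' = a := Finset.HasAntidiagonal.mem_antidiagonal.1 hi
    rw [abs_mul, Nat.abs_cast]
    refine mul_le_mul_of_nonneg_left ?_ (by positivity)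
    refine (Finset.abs_sum_le_sum_abs _ _).trans (Finset.sum_le_sum ?_)
    rintro ⟨j, j'⟩ hj
    replace hj : j + j' = b := Finset.HasAntidiagonal.mem_antidiagonal.1 hj
    rw [abs_mul, Nat.abs_cast]
    refine mul_le_mul_of_nonneg_left ?_ (by positivity)
    rw [abs_mul]
    refine (mul_le_mul (Bf i j (by omega) (by omega) z hz) (Bg i' j' (by omega) (by omega) z hz)
      (abs_nonneg _) ?_).trans (le_of_eq ?_)
    · have := hps (i + j)
      positivity
    · rw [hC, ← hi, ← hj, pow_add, pow_add]; ring
  refine key.trans ?_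
  rw [vander b a (fun x y => C * (psi x ^ s * psi y ^ s))]
  have := mul_le_mul_of_nonneg_left (psi_conv_s hs (a + b)) hC0
  rw [Finset.mul_sum] at this
  refine (le_of_eq ?_).trans (this.trans (le_of_eq ?_))
  · apply Finset.sum_congr rfl; intros; ring
  · rw [hC]; ring

theorem BB_base {p₀ μ s H₁ H₂ K : ℝ} (hs : 1 ≤ s) (h1 : 1 ≤ H₁) (h2 : 1 ≤ H₂)
    {α₀ : ℕ × ℕ} (hα : 3 ≤ α₀.1 + α₀.2) {f : ℝ × ℝ → ℝ} {j : ℕ} (hj : 1 ≤ j) (hj2 : j ≤ 2)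
    (hK : cknorm p₀ 2 f ≤ K) (hf : memA p₀ μ s H₁ H₂ α₀ j f) :
    BB p₀ s H₁ H₂ α₀ (max K 1 * 5 ^ s) f := by
  intro a b ha hb z hz
  obtain ⟨⟨-, hbd, -⟩, hA⟩ := hf
  have hH : 1 ≤ H₁ ^ a * H₂ ^ b := one_le_mul_of_one_le_of_one_le (one_le_pow₀ h1) (one_le_pow₀ h2)
  have hfac : ((a + b - 2).factorial : ℝ) ^ s ≤ 5 ^ s * psi (a + b) ^ s := by
    rw [← Real.mul_rpow (by norm_num) (psi_pos _).le]
    exact Real.rpow_le_rpow (by positivity) (fac_le _) (by linarith)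
  have hfac1 : ∀ n : ℕ, (1 : ℝ) ≤ (n.factorial : ℝ) ^ s := fun n =>
    Real.one_le_rpow (by exact_mod_cast Nat.factorial_pos n) (by linarith)
  have hm : 1 ≤ max K 1 := le_max_right _ _
  suffices h : |pd p₀ a b f z| ≤ max K 1 * (H₁ ^ a * H₂ ^ b * ((a + b - 2).factorial : ℝ) ^ s) by
    refine h.trans ?_
    have h3 := mul_le_mul_of_nonneg_left (mul_le_mul_of_nonneg_left hfac
      (by linarith : 0 ≤ H₁ ^ a * H₂ ^ b)) (by linarith : 0 ≤ max K 1)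
    exact h3.trans (le_of_eq (by ring))
  by_cases hab : a + b ≤ 2
  · have hs1 : |pd p₀ a b f z| ≤ supS p₀ (pd p₀ a b f) :=
      le_csSup (hbd a b (by omega)) ⟨z, hz, rfl⟩
    have hnn : ∀ i k, 0 ≤ supS p₀ (pd p₀ i k f) := by
      intro i k
      apply Real.sSup_nonneg
      rintro _ ⟨y, _, rfl⟩
      exact abs_nonneg _
    have hs2 : supS p₀ (pd p₀ a b f) ≤ cknorm p₀ 2 f := by
      unfold cknorm
      refine (Finset.single_le_sum (f := fun k => supS p₀ (pd p₀ a k f)) (fun k _ => hnn a k)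
        (Finset.mem_range.2 (show b < 2 + 1 - a by omega))).trans ?_
      exact Finset.single_le_sum (f := fun i => ∑ b ∈ Finset.range (2 + 1 - i), supS p₀ (pd p₀ i b f))
        (fun i _ => Finset.sum_nonneg fun k _ => hnn i k) (Finset.mem_range.2 (by omega))
    have := le_max_left K 1
    refine (by linarith : |pd p₀ a b f z| ≤ max K 1).trans ?_
    exact le_mul_of_one_le_right (by linarith) (one_le_mul_of_one_le_of_one_le hH (hfac1 _))
  · refine (hA a b ha hb (by omega) z hz).trans ?_
    refine le_trans ?_ (le_mul_of_one_le_left (by have := hfac1 (a + b - 2); positivity) hm)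
    gcongr
    · rw [← zpow_natCast]
      exact zpow_le_zpow_right₀ h1 (by omega)
    · omega

/-- If `u ∈ 𝒜₂` and `v, w ∈ 𝒜₁` then `c_*⁻¹ uvw ∈ 𝒜₀` for a constant `c_*` depending only
on the `C²`-norms of `u, v, w` (and independent of `α₀, H₁, H₂`). -/
theorem memA_two_one_one_mul (p₀ μ s K : ℝ) (hp₀ : p₀ < 0) (hμ : μ ∈ Set.Ioo (0 : ℝ) 1)
    (hs : 1 ≤ s) :
    ∃ c : ℝ, 1 ≤ c ∧ ∀ (α₀ : ℕ × ℕ) (H₁ H₂ : ℝ) (u v w : ℝ × ℝ → ℝ),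
      3 ≤ α₀.1 + α₀.2 → 1 ≤ H₁ → H₁ ≤ H₂ →
      cknorm p₀ 2 u ≤ K → cknorm p₀ 2 v ≤ K → cknorm p₀ 2 w ≤ K →
      memA p₀ μ s H₁ H₂ α₀ 2 u → memA p₀ μ s H₁ H₂ α₀ 1 v → memA p₀ μ s H₁ H₂ α₀ 1 w →
      ∀ a b : ℕ, a ≤ α₀.1 → b ≤ α₀.2 → 1 ≤ a + b → ∀ z ∈ Strip p₀,
        |pd p₀ a b (fun y => u y * v y * w y) z| ≤
          c * H₁ ^ a * H₂ ^ b * (Nat.factorial (a + b - 1) : ℝ) ^ s := by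
  have hm : 1 ≤ max K 1 := le_max_right _ _
  have h5 : (1 : ℝ) ≤ 5 ^ s := Real.one_le_rpow (by norm_num) (by linarith)
  have h8 : (1 : ℝ) ≤ 8 ^ s := Real.one_le_rpow (by norm_num) (by linarith)
  set M := max K 1 * 5 ^ s with hM
  have hM1 : 1 ≤ M := one_le_mul_of_one_le_of_one_le hm h5
  refine ⟨8 ^ s * (8 ^ s * M * M) * M, ?_, ?_⟩
  · exact one_le_mul_of_one_le_of_one_le (one_le_mul_of_one_le_of_one_le h8
      (one_le_mul_of_one_le_of_one_le (one_le_mul_of_one_le_of_one_le h8 hM1) hM1)) hM1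
  intro α₀ H₁ H₂ u v w hα h1 h12 hu hv hw Au Av Aw a b ha hb hab z hz
  have h2 : 1 ≤ H₂ := h1.trans h12
  have Bu := BB_base hs h1 h2 hα (by norm_num) le_rfl hu Au
  have Bv := BB_base hs h1 h2 hα le_rfl (by norm_num) hv Av
  have Bw := BB_base hs h1 h2 hα le_rfl (by norm_num) hw Aw
  have B1 := BB_mul hp₀ hs (by linarith) (by linarith) (by linarith) (by linarith)
    Au.1.1 Av.1.1 Bu Bv
  have B2 := BB_mul hp₀ hs (by linarith) (by linarith) (by positivity) (by linarith)
    (Au.1.1.mul Av.1.1) Aw.1.1 B1 Bw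
  refine (B2 a b ha hb z hz).trans ?_
  rw [← hM, ← mul_assoc, ← mul_assoc]
  refine mul_le_mul_of_nonneg_left ?_ (by positivity)
  exact Real.rpow_le_rpow (psi_pos _).le (psi_le _ hab) (by linarith)
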